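/- Let μ be a compactly supported Borel probability measure on ℝ, fix t ≥ 1, and let D ∈ ℝ^{t×t} be strictly lower triangular. For every lower triangular B ∈ ℝ^{t×t} and every λ ∈ ℝ, the matrix I_t − λ·D + B·D is lower triangular with unit diagonal, hence invertible; set P_B(λ) := (I_t − λ·D + B·D)^{−1}·(λ·I_t − B), whose entries are polynomials in λ. Then there exists exactly one lower triangular matrix B ∈ ℝ^{t×t} such that ∫ P_B(λ) dμ(λ) = 0 (the integral taken entrywise). -/

import Mathlib

open MeasureTheory

/-!
Write `M = λ - B`, so that `P_B(λ) = (1 - M D)⁻¹ M`. Since `M D` is strictly lower triangular, the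
inverse is a finite Neumann series and `P_B` is a matrix of polynomials. By the resolvent identity,
changing `M` by `Δ` supported on or below the `d`-th subdiagonal changes `P_B` by `Δ` up to an error
supported on or below the `(d + 1)`-st subdiagonal. As `μ` has total mass one, the map
`B ↦ B + ∫ P_B dμ` therefore gains one subdiagonal at each application: it is a contraction for a
finite filtration, and has exactly one fixed point.
-/

open Polynomial

section Filtration

variable {G : Type*} [AddCommGroup G] {V : ℕ → AddSubgroup G} {Φ : G → G}

theorem iterate_sub_iterate_mem_filtration (hmaps : Set.MapsTo Φ (V 0) (V 0))
    (hcontr : ∀ d, ∀ x ∈ V 0, ∀ y ∈ V 0, x - y ∈ V d → Φ x - Φ y ∈ V (d + 1))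
    {x y : G} (hx : x ∈ V 0) (hy : y ∈ V 0) (n : ℕ) : Φ^[n] x - Φ^[n] y ∈ V n := by
  induction n with
  | zero => exact sub_mem hx hy
  | succ n ih =>
    simp only [Function.iterate_succ_apply']
    exact hcontr n _ (hmaps.iterate n hx) _ (hmaps.iterate n hy) ih

theorem existsUnique_isFixedPt_of_filtration {N : ℕ} (hN : V N = ⊥)
    (hmaps : Set.MapsTo Φ (V 0) (V 0))
    (hcontr : ∀ d, ∀ x ∈ V 0, ∀ y ∈ V 0, x - y ∈ V d → Φ x - Φ y ∈ V (d + 1)) :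
    ∃! x, x ∈ V 0 ∧ Function.IsFixedPt Φ x := by
  have iterate_eq {x y : G} (hx : x ∈ V 0) (hy : y ∈ V 0) : Φ^[N] x = Φ^[N] y := by
    have h := iterate_sub_iterate_mem_filtration hmaps hcontr hx hy N
    rwa [hN, AddSubgroup.mem_bot, sub_eq_zero] at h
  have h0 : (0 : G) ∈ V 0 := zero_mem _
  refine ⟨Φ^[N] 0, ⟨hmaps.iterate N h0, ?_⟩, fun x ⟨hx, hfix⟩ => ?_⟩
  · rw [Function.IsFixedPt, ← Function.iterate_succ_apply' Φ, Function.iterate_succ_apply]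
    exact iterate_eq (hmaps h0) h0
  · rw [← iterate_eq hx h0, hfix.iterate N]

end Filtration

section LowerBand

variable {S S' : Type*} [Semiring S] [Semiring S'] {t d e : ℕ}

/-- The matrices supported on or below the `d`-th subdiagonal: lower triangular for `d = 0`,
strictly lower triangular for `d = 1`. These submodules filter the lower triangular matrices. -/
def lowerBand (S : Type*) [Semiring S] (t d : ℕ) : Submodule S (Matrix (Fin t) (Fin t) S) where
  carrier := {A | ∀ i j : Fin t, (i : ℕ) < j + d → A i j = 0}
  zero_mem' _ _ _ := rfl
  add_mem' hA hB i j hij := by simp [hA i j hij, hB i j hij]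
  smul_mem' c A hA i j hij := by simp [hA i j hij]

theorem mem_lowerBand {A : Matrix (Fin t) (Fin t) S} :
    A ∈ lowerBand S t d ↔ ∀ i j : Fin t, (i : ℕ) < j + d → A i j = 0 :=
  Iff.rfl

theorem mem_lowerBand_zero {A : Matrix (Fin t) (Fin t) S} :
    A ∈ lowerBand S t 0 ↔ ∀ i j : Fin t, i < j → A i j = 0 :=
  Iff.rfl

theorem mem_lowerBand_one {A : Matrix (Fin t) (Fin t) S} :
    A ∈ lowerBand S t 1 ↔ ∀ i j : Fin t, i ≤ j → A i j = 0 := by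
  simp only [mem_lowerBand, Nat.lt_succ_iff, Fin.le_def]

theorem lowerBand_antitone : Antitone (lowerBand S t) :=
  fun _ _ hde _ hA i j hij => hA i j (by omega)

theorem lowerBand_self : lowerBand S t t = ⊥ :=
  (Submodule.eq_bot_iff _).2 fun _ hA => Matrix.ext fun i j => hA i j (by omega)

theorem one_mem_lowerBand : (1 : Matrix (Fin t) (Fin t) S) ∈ lowerBand S t 0 :=
  fun _ _ hij => Matrix.one_apply_ne (Fin.ne_of_lt hij)

theorem mul_mem_lowerBand {A B : Matrix (Fin t) (Fin t) S} (hA : A ∈ lowerBand S t d)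
    (hB : B ∈ lowerBand S t e) : A * B ∈ lowerBand S t (d + e) := by
  intro i j hij
  rw [Matrix.mul_apply]
  refine Finset.sum_eq_zero fun k _ => ?_
  rcases lt_or_ge (i : ℕ) (k + d) with hik | hki
  · rw [hA i k hik, zero_mul]
  · rw [hB k j (by omega), mul_zero]

theorem mul_mem_lowerBand_one {M D : Matrix (Fin t) (Fin t) S} (hM : M ∈ lowerBand S t 0)
    (hD : D ∈ lowerBand S t 1) : M * D ∈ lowerBand S t 1 := by
  simpa only [zero_add] using mul_mem_lowerBand hM hD

theorem pow_mem_lowerBand {N : Matrix (Fin t) (Fin t) S} (hN : N ∈ lowerBand S t 1) (k : ℕ) :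
    N ^ k ∈ lowerBand S t k := by
  induction k with
  | zero => simpa only [pow_zero] using one_mem_lowerBand
  | succ k ih => simpa only [pow_succ] using mul_mem_lowerBand ih hN

theorem pow_eq_zero_of_mem_lowerBand {N : Matrix (Fin t) (Fin t) S} (hN : N ∈ lowerBand S t 1) :
    N ^ t = 0 := by
  simpa only [lowerBand_self, Submodule.mem_bot] using pow_mem_lowerBand hN t

theorem map_mem_lowerBand {F : Type*} [FunLike F S S'] [ZeroHomClass F S S'] (f : F)
    {A : Matrix (Fin t) (Fin t) S} (hA : A ∈ lowerBand S t d) : A.map f ∈ lowerBand S' t d :=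
  fun i j hij => by rw [Matrix.map_apply, hA i j hij, map_zero]

end LowerBand

section Neumann

variable {S S' : Type*} [Semiring S] [Semiring S'] {t : ℕ}

/-- The Neumann series of `(1 - N)⁻¹`, truncated at the order from which the powers of a strictly
lower triangular `t × t` matrix vanish. -/
def neumannSum (N : Matrix (Fin t) (Fin t) S) : Matrix (Fin t) (Fin t) S :=
  ∑ k ∈ Finset.range t, N ^ k

/-- The matrix `(1 - M D)⁻¹ M`, with the inverse expanded as a Neumann series so that it makes sense
over every semiring and commutes with ring homomorphisms. For `M = λ - B` it is `P_B(λ)`. -/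
def neumannTransform (D M : Matrix (Fin t) (Fin t) S) : Matrix (Fin t) (Fin t) S :=
  neumannSum (M * D) * M

theorem map_neumannTransform (f : S →+* S') (D M : Matrix (Fin t) (Fin t) S) :
    (neumannTransform D M).map f = neumannTransform (D.map f) (M.map f) := by
  simp only [← RingHom.mapMatrix_apply, neumannTransform, neumannSum, map_mul, map_sum, map_pow]

variable {N D M : Matrix (Fin t) (Fin t) S}

theorem neumannSum_mem_lowerBand (hN : N ∈ lowerBand S t 1) : neumannSum N ∈ lowerBand S t 0 :=
  Submodule.sum_mem _ fun k _ => lowerBand_antitone k.zero_le (pow_mem_lowerBand hN k)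

theorem neumannTransform_mem_lowerBand (hD : D ∈ lowerBand S t 1) (hM : M ∈ lowerBand S t 0) :
    neumannTransform D M ∈ lowerBand S t 0 :=
  mul_mem_lowerBand (neumannSum_mem_lowerBand (mul_mem_lowerBand_one hM hD)) hM

end Neumann

section ResolventIdentity

variable {S : Type*} [Ring S] {t d : ℕ} {N D M M' : Matrix (Fin t) (Fin t) S}

theorem one_sub_mul_neumannSum (hN : N ∈ lowerBand S t 1) : (1 - N) * neumannSum N = 1 := by
  rw [neumannSum, mul_neg_geom_sum, pow_eq_zero_of_mem_lowerBand hN, sub_zero]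

theorem neumannSum_mul_one_sub (hN : N ∈ lowerBand S t 1) : neumannSum N * (1 - N) = 1 := by
  rw [neumannSum, geom_sum_mul_neg, pow_eq_zero_of_mem_lowerBand hN, sub_zero]

theorem neumannTransform_eq_add (hD : D ∈ lowerBand S t 1) (hM : M ∈ lowerBand S t 0) :
    neumannTransform D M = M + M * D * neumannTransform D M := by
  have h : (1 - M * D) * neumannTransform D M = M := by
    rw [neumannTransform, ← mul_assoc, one_sub_mul_neumannSum (mul_mem_lowerBand_one hM hD),
      one_mul]
  rwa [sub_mul, one_mul, sub_eq_iff_eq_add] at h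

theorem neumannTransform_sub (hD : D ∈ lowerBand S t 1) (hM : M ∈ lowerBand S t 0)
    (hM' : M' ∈ lowerBand S t 0) :
    neumannTransform D M - neumannTransform D M' =
      neumannSum (M' * D) * ((M - M') * (1 + D * neumannTransform D M)) := by
  have hP := neumannTransform_eq_add hD hM
  have hP' := neumannTransform_eq_add hD hM'
  set P := neumannTransform D M
  set P' := neumannTransform D M'
  have hdiff : (1 - M' * D) * (P - P') = (M - M') * (1 + D * P) :=
    calc (1 - M' * D) * (P - P') = P - M' * D * P - (P' - M' * D * P') := by noncomm_ring
      _ = (M + M * D * P) - M' * D * P - M' := by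
        rw [← hP, sub_eq_of_eq_add hP']
      _ = (M - M') * (1 + D * P) := by noncomm_ring
  rw [← hdiff, ← mul_assoc, neumannSum_mul_one_sub (mul_mem_lowerBand_one hM' hD), one_mul]

theorem neumannTransform_sub_mem_lowerBand (hD : D ∈ lowerBand S t 1) (hM : M ∈ lowerBand S t 0)
    (hM' : M' ∈ lowerBand S t 0) (hsub : M - M' ∈ lowerBand S t d) :
    neumannTransform D M - neumannTransform D M' ∈ lowerBand S t d := by
  have hDP := mul_mem_lowerBand hD (neumannTransform_mem_lowerBand hD hM)
  have hfactor : 1 + D * neumannTransform D M ∈ lowerBand S t 0 :=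
    add_mem one_mem_lowerBand (lowerBand_antitone (Nat.zero_le _) hDP)
  have hsum := neumannSum_mem_lowerBand (mul_mem_lowerBand_one hM' hD)
  simpa only [neumannTransform_sub hD hM hM', zero_add, add_zero] using
    mul_mem_lowerBand hsum (mul_mem_lowerBand hsub hfactor)

theorem neumannTransform_sub_sub_mem_lowerBand (hD : D ∈ lowerBand S t 1)
    (hM : M ∈ lowerBand S t 0) (hM' : M' ∈ lowerBand S t 0) (hsub : M - M' ∈ lowerBand S t d) :
    neumannTransform D M - neumannTransform D M' - (M - M') ∈ lowerBand S t (d + 1) := by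
  have hP := neumannTransform_eq_add hD hM
  have hP' := neumannTransform_eq_add hD hM'
  have hPmem := neumannTransform_mem_lowerBand hD hM
  have hPsub := neumannTransform_sub_mem_lowerBand hD hM hM' hsub
  set P := neumannTransform D M
  set P' := neumannTransform D M'
  have herror : P - P' - (M - M') = (M - M') * D * P + M' * D * (P - P') :=
    calc P - P' - (M - M') = (M + M * D * P) - (M' + M' * D * P') - (M - M') := by
          rw [← hP, ← hP']
      _ = (M - M') * D * P + M' * D * (P - P') := by noncomm_ring
  rw [herror]
  refine add_mem ?_ ?_
  · simpa only [add_zero] using mul_mem_lowerBand (mul_mem_lowerBand hsub hD) hPmem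
  · simpa only [add_comm d] using mul_mem_lowerBand (mul_mem_lowerBand_one hM' hD) hPsub

end ResolventIdentity

section Functional

variable {R A : Type*} [CommRing R] [Ring A] [Algebra R A] {t d : ℕ}
  {D Λ : Matrix (Fin t) (Fin t) A} {B B' : Matrix (Fin t) (Fin t) R}

theorem sub_map_algebraMap_mem_lowerBand (hΛ : Λ ∈ lowerBand A t 0) (hB : B ∈ lowerBand R t 0) :
    Λ - B.map (algebraMap R A) ∈ lowerBand A t 0 :=
  sub_mem hΛ (map_mem_lowerBand (algebraMap R A) hB)

theorem functional_algebraMap {φ : A →ₗ[R] R} (hφ : φ 1 = 1) (r : R) :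
    φ (algebraMap R A r) = r := by
  rw [Algebra.algebraMap_eq_smul_one, map_smul, hφ, smul_eq_mul, mul_one]

/-- The map `B ↦ B + φ((1 - (Λ - B) D)⁻¹ (Λ - B))`, with `φ` applied entrywise; its fixed points are
the zeros of the second summand. -/
def correctionMap (φ : A →ₗ[R] R) (D Λ : Matrix (Fin t) (Fin t) A)
    (B : Matrix (Fin t) (Fin t) R) : Matrix (Fin t) (Fin t) R :=
  B + (neumannTransform D (Λ - B.map (algebraMap R A))).map φ

theorem correctionMap_mem_lowerBand (φ : A →ₗ[R] R) (hD : D ∈ lowerBand A t 1)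
    (hΛ : Λ ∈ lowerBand A t 0) (hB : B ∈ lowerBand R t 0) :
    correctionMap φ D Λ B ∈ lowerBand R t 0 :=
  add_mem hB <| map_mem_lowerBand φ <|
    neumannTransform_mem_lowerBand hD (sub_map_algebraMap_mem_lowerBand hΛ hB)

theorem correctionMap_sub_mem_lowerBand {φ : A →ₗ[R] R} (hφ : φ 1 = 1)
    (hD : D ∈ lowerBand A t 1) (hΛ : Λ ∈ lowerBand A t 0) (hB : B ∈ lowerBand R t 0)
    (hB' : B' ∈ lowerBand R t 0) (hsub : B - B' ∈ lowerBand R t d) :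
    correctionMap φ D Λ B - correctionMap φ D Λ B' ∈ lowerBand R t (d + 1) := by
  set M := Λ - B.map (algebraMap R A) with hMdef
  set M' := Λ - B'.map (algebraMap R A) with hM'def
  have hMsub : M - M' = (B' - B).map (algebraMap R A) := by
    rw [Matrix.map_sub _ (map_sub _), hMdef, hM'def, sub_sub_sub_cancel_left]
  have hMsub_mem : M - M' ∈ lowerBand A t d :=
    hMsub ▸ map_mem_lowerBand (algebraMap R A) (sub_mem_comm_iff.1 hsub)
  have herror := neumannTransform_sub_sub_mem_lowerBand hD
    (sub_map_algebraMap_mem_lowerBand hΛ hB) (sub_map_algebraMap_mem_lowerBand hΛ hB') hMsub_mem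
  convert map_mem_lowerBand φ herror using 1
  ext i j
  simp only [correctionMap, hMsub, Matrix.sub_apply, Matrix.add_apply, Matrix.map_apply, map_sub,
    functional_algebraMap hφ, ← hMdef, ← hM'def]
  ring

theorem existsUnique_map_neumannTransform_eq_zero {φ : A →ₗ[R] R} (hφ : φ 1 = 1)
    (hD : D ∈ lowerBand A t 1) (hΛ : Λ ∈ lowerBand A t 0) :
    ∃! B : Matrix (Fin t) (Fin t) R, B ∈ lowerBand R t 0 ∧
      (neumannTransform D (Λ - B.map (algebraMap R A))).map φ = 0 := by
  have hfix := existsUnique_isFixedPt_of_filtration (Φ := correctionMap φ D Λ)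
    (V := fun d => (lowerBand R t d).toAddSubgroup) (N := t)
    (by rw [lowerBand_self, Submodule.bot_toAddSubgroup])
    (fun _ hB => correctionMap_mem_lowerBand φ hD hΛ hB)
    (fun _ _ hB _ hB' => correctionMap_sub_mem_lowerBand hφ hD hΛ hB hB')
  simpa only [Function.IsFixedPt, correctionMap, add_eq_left, Submodule.mem_toAddSubgroup]
    using hfix

end Functional

section Inverse

variable {R : Type*} [CommRing R] {t : ℕ} {D M B : Matrix (Fin t) (Fin t) R}

theorem inv_one_sub_mul_eq_neumannTransform (hD : D ∈ lowerBand R t 1)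
    (hM : M ∈ lowerBand R t 0) : (1 - M * D)⁻¹ * M = neumannTransform D M := by
  rw [Matrix.inv_eq_right_inv (one_sub_mul_neumannSum (mul_mem_lowerBand_one hM hD)),
    neumannTransform]

theorem inv_mul_eq_eval_neumannTransform (hD : D ∈ lowerBand R t 1) (hB : B ∈ lowerBand R t 0)
    (x : R) :
    (1 - x • D + B * D)⁻¹ * (x • 1 - B) =
      (neumannTransform (D.map C) (Matrix.scalar (Fin t) X - B.map C)).map (eval x) := by
  have hM : x • (1 : Matrix (Fin t) (Fin t) R) - B ∈ lowerBand R t 0 :=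
    sub_mem (Submodule.smul_mem _ x one_mem_lowerBand) hB
  have hfactor : 1 - x • D + B * D = 1 - (x • 1 - B) * D := by
    rw [sub_mul, smul_mul_assoc, one_mul, sub_add]
  have hevalD : (D.map C).map (evalRingHom x) = D := by ext; simp
  have hevalM : (Matrix.scalar (Fin t) X - B.map C).map (evalRingHom x) = x • 1 - B := by
    ext i j
    by_cases hij : i = j <;> simp [hij]
  rw [hfactor, inv_one_sub_mul_eq_neumannTransform hD hM, ← coe_evalRingHom, map_neumannTransform,
    hevalD, hevalM]

end Inverse

section Moments

variable {μ : Measure ℝ}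

theorem integrable_eval_of_integrable_pow (hμ : ∀ n : ℕ, Integrable (fun x => x ^ n) μ)
    (p : ℝ[X]) : Integrable (fun x => p.eval x) μ := by
  simp only [eval_eq_sum_range]
  exact integrable_finsetSum _ fun n _ => (hμ n).const_mul _

/-- Integration of polynomials against a measure all of whose moments are finite. -/
noncomputable def momentFunctional (hμ : ∀ n : ℕ, Integrable (fun x => x ^ n) μ) :
    ℝ[X] →ₗ[ℝ] ℝ where
  toFun p := ∫ x, p.eval x ∂μ
  map_add' p q := by
    simp only [eval_add]
    exact integral_add (integrable_eval_of_integrable_pow hμ p)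
      (integrable_eval_of_integrable_pow hμ q)
  map_smul' c p := by
    simp only [eval_smul, integral_smul, RingHom.id_apply]

theorem momentFunctional_apply (hμ : ∀ n : ℕ, Integrable (fun x => x ^ n) μ) (p : ℝ[X]) :
    momentFunctional hμ p = ∫ x, p.eval x ∂μ :=
  rfl

theorem momentFunctional_one [IsProbabilityMeasure μ]
    (hμ : ∀ n : ℕ, Integrable (fun x => x ^ n) μ) : momentFunctional hμ 1 = 1 := by
  simp [momentFunctional_apply]

theorem integrable_of_continuous_of_isCompact {α E : Type*} [TopologicalSpace α] [T2Space α]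
    [MeasurableSpace α] [OpensMeasurableSpace α] [NormedAddCommGroup E] {ν : Measure α}
    [IsFiniteMeasureOnCompacts ν] {K : Set α} (hK : IsCompact K) (hKc : ν Kᶜ = 0) {f : α → E}
    (hf : Continuous f) : Integrable f ν := by
  have hrestrict : ν.restrict K = ν := Measure.restrict_eq_self_of_ae_mem (mem_ae_iff.2 hKc)
  simpa only [IntegrableOn, hrestrict] using hf.continuousOn.integrableOn_compact (μ := ν) hK

end Moments

theorem stmt8_general (μ : Measure ℝ) [IsProbabilityMeasure μ]
    (hμ : ∀ n : ℕ, Integrable (fun x => x ^ n) μ) (t : ℕ)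
    (D : Matrix (Fin t) (Fin t) ℝ) (hD : ∀ i j : Fin t, i ≤ j → D i j = 0) :
    ∃! B : Matrix (Fin t) (Fin t) ℝ,
      (∀ i j : Fin t, i < j → B i j = 0) ∧
      ∀ i j : Fin t,
        (∫ x, (((1 : Matrix (Fin t) (Fin t) ℝ) - x • D + B * D)⁻¹ *
            (x • (1 : Matrix (Fin t) (Fin t) ℝ) - B)) i j ∂μ) = 0 := by
  rw [← mem_lowerBand_one] at hD
  have hX : Matrix.scalar (Fin t) (X : ℝ[X]) ∈ lowerBand ℝ[X] t 0 :=
    fun _ _ hij => Matrix.diagonal_apply_ne _ (Fin.ne_of_lt hij)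
  refine (existsUnique_congr fun B => ?_).1 <| existsUnique_map_neumannTransform_eq_zero
    (momentFunctional_one hμ) (map_mem_lowerBand C hD) hX
  rw [← mem_lowerBand_zero]
  refine and_congr_right fun hB => ?_
  simp only [inv_mul_eq_eval_neumannTransform hD hB, ← Matrix.ext_iff, Matrix.map_apply,
    momentFunctional_apply, Matrix.zero_apply, algebraMap_eq]

theorem stmt8 (μ : Measure ℝ) [IsProbabilityMeasure μ]
    (K : Set ℝ) (hK : IsCompact K) (hKc : μ Kᶜ = 0)
    (t : ℕ) (ht : 1 ≤ t)
    (D : Matrix (Fin t) (Fin t) ℝ)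
    (hD : ∀ i j : Fin t, i ≤ j → D i j = 0) :
    ∃! B : Matrix (Fin t) (Fin t) ℝ,
      (∀ i j : Fin t, i < j → B i j = 0) ∧
      ∀ i j : Fin t,
        (∫ x, (((1 : Matrix (Fin t) (Fin t) ℝ) - x • D + B * D)⁻¹ *
            (x • (1 : Matrix (Fin t) (Fin t) ℝ) - B)) i j ∂μ) = 0 :=
  stmt8_general μ
    (fun n => integrable_of_continuous_of_isCompact hK hKc (continuous_pow n)) t D hD
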